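/- arXiv:2003.04444 — 2 statements merged into one kernel-verified Lean document; each statement's English description precedes it below -/
import Mathlib

section
/- Let N be a positive integer, h > 0, Δt > 0, ν ∈ ℝ, and for each i ∈ ZMod N let H̃_i : ℝ² → ℝ be differentiable. Suppose the grid functions M, M', U : ZMod N → ℝ satisfy, for every i ∈ ZMod N, the implicit discrete Kolmogorov–Fokker–Planck step (M'_i − M_i)/Δt − ν (Δ_h M')_i − 𝒯_i(U, M') = 0. Then the total mass is conserved: ∑_{i ∈ ZMod N} M'_i = ∑_{i ∈ ZMod N} M_i. -/
/-!
On the cyclic group `ZMod N`, summation over all indices is invariant under the shifts `i ↦ i ± 1`.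
Hence the diffusion term `lapl` and the transport term `Ttrans`, both combinations of shifted
copies of grid functions whose coefficients cancel, have zero total sum (`sum_lapl`,
`sum_Ttrans`). Summing the scheme over `i` leaves only `(∑ M' - ∑ M) / dt = 0`.
-/

noncomputable section

/-- Forward difference operator on periodic grid functions. -/
def Dop (N : ℕ) (h : ℝ) (W : ZMod N → ℝ) (i : ZMod N) : ℝ := (W (i + 1) - W i) / h

/-- Discrete Laplacian `(Δ_h W)_i = (W_{i+1} - 2W_i + W_{i-1})/h²`. -/
def lapl (N : ℕ) (h : ℝ) (W : ZMod N → ℝ) (i : ZMod N) : ℝ :=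
  (W (i + 1) - 2 * W i + W (i - 1)) / h ^ 2

/-- Discrete gradient `[∇_h W]_i = ((D W)_i, (D W)_{i-1})`. -/
def gradh (N : ℕ) (h : ℝ) (W : ZMod N → ℝ) (i : ZMod N) : ℝ × ℝ :=
  (Dop N h W i, Dop N h W (i - 1))

/-- First partial derivative of a function on `ℝ²`. -/
def dH1 (Ht : ℝ × ℝ → ℝ) (p : ℝ × ℝ) : ℝ := fderiv ℝ Ht p (1, 0)

/-- Second partial derivative of a function on `ℝ²`. -/
def dH2 (Ht : ℝ × ℝ → ℝ) (p : ℝ × ℝ) : ℝ := fderiv ℝ Ht p (0, 1)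

/-- Discrete transport operator `𝒯_i(U, M)`. -/
def Ttrans (N : ℕ) (h : ℝ) (Ht : ZMod N → ℝ × ℝ → ℝ) (U M : ZMod N → ℝ)
    (i : ZMod N) : ℝ :=
  (1 / h) *
    ( M i * dH1 (Ht i) (gradh N h U i)
      - M (i - 1) * dH1 (Ht (i - 1)) (gradh N h U (i - 1))
      + M (i + 1) * dH2 (Ht (i + 1)) (gradh N h U (i + 1))
      - M i * dH2 (Ht i) (gradh N h U i) )

theorem sum_shift_add (N : ℕ) [NeZero N] (f : ZMod N → ℝ) :
    ∑ i : ZMod N, f (i + 1) = ∑ i : ZMod N, f i :=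
  Equiv.sum_comp (Equiv.addRight (1 : ZMod N)) f

theorem sum_shift_sub (N : ℕ) [NeZero N] (f : ZMod N → ℝ) :
    ∑ i : ZMod N, f (i - 1) = ∑ i : ZMod N, f i :=
  Equiv.sum_comp (Equiv.subRight (1 : ZMod N)) f

theorem sum_lapl (N : ℕ) [NeZero N] (h : ℝ) (W : ZMod N → ℝ) :
    ∑ i : ZMod N, lapl N h W i = 0 := by
  simp only [lapl]
  rw [← Finset.sum_div, Finset.sum_add_distrib, Finset.sum_sub_distrib, sum_shift_add,
    sum_shift_sub, ← Finset.mul_sum]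
  ring

theorem sum_Ttrans (N : ℕ) [NeZero N] (h : ℝ) (Ht : ZMod N → ℝ × ℝ → ℝ) (U M : ZMod N → ℝ) :
    ∑ i : ZMod N, Ttrans N h Ht U M i = 0 := by
  have h1 := sum_shift_sub N fun i => M i * dH1 (Ht i) (gradh N h U i)
  have h2 := sum_shift_add N fun i => M i * dH2 (Ht i) (gradh N h U i)
  simp only [Ttrans]
  rw [← Finset.mul_sum, Finset.sum_sub_distrib, Finset.sum_add_distrib, Finset.sum_sub_distrib,
    h1, h2]
  ring

/-- The implicit discrete Kolmogorov–Fokker–Planck step conserves the total mass. -/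
theorem discrete_KFP_mass_conservation (N : ℕ) [NeZero N] (h dt ν : ℝ)
    (hh : 0 < h) (hdt : 0 < dt)
    (Ht : ZMod N → ℝ × ℝ → ℝ) (hdiff : ∀ i, Differentiable ℝ (Ht i))
    (M M' U : ZMod N → ℝ)
    (hstep : ∀ i : ZMod N,
      (M' i - M i) / dt - ν * lapl N h M' i - Ttrans N h Ht U M' i = 0) :
    ∑ i : ZMod N, M' i = ∑ i : ZMod N, M i := by
  have hsum := Finset.sum_eq_zero fun i (_ : i ∈ Finset.univ) => hstep i
  rw [Finset.sum_sub_distrib, Finset.sum_sub_distrib, ← Finset.mul_sum, sum_lapl, sum_Ttrans,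
    ← Finset.sum_div, Finset.sum_sub_distrib, mul_zero, sub_zero, sub_zero] at hsum
  exact sub_eq_zero.mp ((div_eq_zero_iff.mp hsum).resolve_right hdt.ne')
end
end

section
/- (Monotone scheme preserves nonnegativity.) Let N be a positive integer, h > 0, Δt > 0, ν ≥ 0, and for each i ∈ ZMod N let H̃_i : ℝ² → ℝ be differentiable with ∂₁H̃_i ≤ 0 and ∂₂H̃_i ≥ 0 everywhere (monotonicity of the discrete Hamiltonian). Let U : ZMod N → ℝ be any grid function. If M, M' : ZMod N → ℝ satisfy, for every i, the implicit discrete Kolmogorov–Fokker–Planck step (M'_i − M_i)/Δt − ν(Δ_h M')_i − 𝒯_i(U, M') = 0, and M_i ≥ 0 for all i, then M'_i ≥ 0 for all i. -/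
/-!
Writing out the implicit step gives
`M' i * (1/dt + a i + c i) = M i / dt + M' (i-1) * a (i-1) + M' (i+1) * c (i+1)`, where
`a i = ν/h² - ∂₁H i / h` and `c i = ν/h² + ∂₂H i / h` are nonnegative by monotonicity.
The scheme matrix thus has nonpositive off-diagonal entries and each of its columns sums to `1/dt`,
so the negative part of `M'` satisfies the same relation with `≤` and without the source `M`.
Summing over the periodic grid, the transport terms cancel and the total negative part is `≤ 0`.
-/

noncomputable section

/-- Steady states of an exchange scheme on a periodic grid with a nonnegative source are
nonnegative: mass moves at rate `a i` from `i` to `i + 1` and at rate `c i` from `i` to `i - 1`,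
and is absorbed at rate `lam`. The hypothesis `hX` says that the source, which is the difference
of its two sides, is nonnegative. -/
theorem nonneg_of_exchange {N : ℕ} [NeZero N] {lam : ℝ} (hlam : 0 < lam)
    {a c X : ZMod N → ℝ} (ha : ∀ i, 0 ≤ a i) (hc : ∀ i, 0 ≤ c i)
    (hX : ∀ i, X (i - 1) * a (i - 1) + X (i + 1) * c (i + 1) ≤ X i * (lam + a i + c i)) :
    ∀ i, 0 ≤ X i := by
  have hn0 : ∀ i, 0 ≤ max (-X i) 0 := fun i => le_max_right _ _
  have hnX : ∀ i, -X i ≤ max (-X i) 0 := fun i => le_max_left _ _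
  have key : ∀ i, max (-X i) 0 * (lam + a i + c i)
      ≤ max (-X (i - 1)) 0 * a (i - 1) + max (-X (i + 1)) 0 * c (i + 1) := by
    intro i
    rcases le_total 0 (X i) with h | h
    · rw [max_eq_right (by linarith : -X i ≤ 0), zero_mul]
      exact add_nonneg (mul_nonneg (hn0 _) (ha _)) (mul_nonneg (hn0 _) (hc _))
    · rw [max_eq_left (by linarith : 0 ≤ -X i)]
      linarith [hX i, mul_le_mul_of_nonneg_right (hnX (i - 1)) (ha (i - 1)),
        mul_le_mul_of_nonneg_right (hnX (i + 1)) (hc (i + 1))]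
  have hsum := Finset.sum_le_sum fun i (_ : i ∈ Finset.univ) => key i
  have e1 : ∑ i, max (-X (i - 1)) 0 * a (i - 1) = ∑ i, max (-X i) 0 * a i :=
    Equiv.sum_comp (Equiv.subRight (1 : ZMod N)) fun i => max (-X i) 0 * a i
  have e2 : ∑ i, max (-X (i + 1)) 0 * c (i + 1) = ∑ i, max (-X i) 0 * c i :=
    Equiv.sum_comp (Equiv.addRight (1 : ZMod N)) fun i => max (-X i) 0 * c i
  simp only [mul_add, Finset.sum_add_distrib, e1, e2, ← Finset.sum_mul] at hsum
  -- The exchange terms cancel in `hsum`, leaving `lam` times the total negative part.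
  have hle : ∑ i, max (-X i) 0 ≤ 0 := by
    by_contra! hpos
    linarith [mul_pos hpos hlam]
  intro i
  linarith [hnX i, Finset.single_le_sum (fun j _ => hn0 j) (Finset.mem_univ i)]

/-- The monotone implicit discrete Kolmogorov–Fokker–Planck step preserves
nonnegativity: if the discrete Hamiltonians are nonincreasing in `p₁` and
nondecreasing in `p₂`, and `M ≥ 0`, then `M' ≥ 0`. -/
theorem discrete_KFP_nonneg (N : ℕ) [NeZero N] (h dt ν : ℝ)
    (hh : 0 < h) (hdt : 0 < dt) (hν : 0 ≤ ν)
    (Ht : ZMod N → ℝ × ℝ → ℝ) (hdiff : ∀ i, Differentiable ℝ (Ht i))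
    (hmono : ∀ (i : ZMod N) (p : ℝ × ℝ), dH1 (Ht i) p ≤ 0 ∧ 0 ≤ dH2 (Ht i) p)
    (U M M' : ZMod N → ℝ)
    (hstep : ∀ i : ZMod N,
      (M' i - M i) / dt - ν * lapl N h M' i - Ttrans N h Ht U M' i = 0)
    (hM : ∀ i, 0 ≤ M i) :
    ∀ i, 0 ≤ M' i := by
  have hν2 : 0 ≤ ν / h ^ 2 := by positivity
  refine nonneg_of_exchange (lam := 1 / dt)
    (a := fun i => ν / h ^ 2 + -dH1 (Ht i) (gradh N h U i) / h)
    (c := fun i => ν / h ^ 2 + dH2 (Ht i) (gradh N h U i) / h) (by positivity) ?_ ?_ ?_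
  · intro i
    exact add_nonneg hν2 (div_nonneg (neg_nonneg.2 (hmono i _).1) hh.le)
  · intro i
    exact add_nonneg hν2 (div_nonneg (hmono i _).2 hh.le)
  · intro i
    have hs := hstep i
    have hMi : 0 ≤ M i / dt := div_nonneg (hM i) hdt.le
    simp only [lapl, Ttrans] at hs
    ring_nf at hs hMi ⊢
    linarith
end
end
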